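/- Theorem 5: For the quaternary sequence u₁₀ = φ[s₁+1, s₃] of period p, the 4-adic complexity satisfies Φ₄(u₁₀) ≥ ⌊log₄((4^p − 1)/(3(1+2p)) + 1)⌋. -/

import Mathlib

open Finset

/-- The cyclotomic class `D_i` of order 4 modulo `p` with respect to the
primitive root `θ`: `{θ^(i+4j) mod p : 0 ≤ j < (p-1)/4}`. -/
def cycD (p θ i : ℕ) : Finset ℕ :=
  (Finset.range ((p - 1) / 4)).image fun j => θ ^ (i + 4 * j) % p

/-- The binary sequence `s₁` with support set `D₀ ∪ D₁`. -/
def seqS1 (p θ : ℕ) (t : ℕ) : ℕ := if t ∈ cycD p θ 0 ∪ cycD p θ 1 then 1 else 0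

/-- The binary sequence `s₂` with support set `D₀ ∪ D₃`. -/
def seqS2 (p θ : ℕ) (t : ℕ) : ℕ := if t ∈ cycD p θ 0 ∪ cycD p θ 3 then 1 else 0

/-- The binary sequence `s₃` with support set `D₁ ∪ D₂`. -/
def seqS3 (p θ : ℕ) (t : ℕ) : ℕ := if t ∈ cycD p θ 1 ∪ cycD p θ 2 then 1 else 0

/-- The binary sequence `s₄` with support set `D₂ ∪ D₃`. -/
def seqS4 (p θ : ℕ) (t : ℕ) : ℕ := if t ∈ cycD p θ 2 ∪ cycD p θ 3 then 1 else 0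

/-- The bitwise complement `s + 1` of a binary sequence. -/
def seqCompl (s : ℕ → ℕ) (t : ℕ) : ℕ := 1 - s t

/-- The inverse Gray mapping: `φ[0,0]=0, φ[0,1]=1, φ[1,1]=2, φ[1,0]=3`. -/
def gray (a b : ℕ) : ℕ := if a = 0 then b else 3 - b

/-- The quaternary sequence `φ[r,s] : t ↦ φ[r(t), s(t)]`. -/
def graySeq (r s : ℕ → ℕ) (t : ℕ) : ℕ := gray (r t) (s t)

/-- The generating value `U(4) = Σ_{t=0}^{p-1} u(t)·4^t` of a quaternary
sequence `u` of period `p`. -/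
def seqVal (p : ℕ) (u : ℕ → ℕ) : ℕ := ∑ t ∈ Finset.range p, u t * 4 ^ t

/-- The 4-adic complexity `Φ₄(u) = ⌊log₄((4^p − 1)/gcd(4^p − 1, U(4)) + 1)⌋`
of a quaternary sequence `u` of period `p`. -/
noncomputable def adicComplexity4 (p : ℕ) (u : ℕ → ℕ) : ℤ :=
  ⌊Real.logb 4 (((4 ^ p - 1 : ℕ) : ℝ) / ((Nat.gcd (4 ^ p - 1) (seqVal p u) : ℕ) : ℝ) + 1)⌋

/-!
On the powers of `θ` the sequence `u₁₀` is the discrete logarithm modulo `4`: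
`u₁₀(θ ^ n) = n mod 4`, and `u₁₀(0) = 3`. So at a primitive `p`-th root of unity `ζ` its generating
polynomial `U` takes the value `U(ζ) = 3 + η₁ + 2η₂ + 3η₃` with the quartic Gaussian periods `η_i`,
and quartic Gauss and Jacobi sums show that this number has norm `((9 + 5p)² - p(6 + 4b)²) / 16` in
the quartic subfield of `ℚ(ζ)`, where `p = a² + b²`. A common divisor of `U(4)` and
`Φ_p(4) = (4 ^ p - 1) / 3` divides this norm, which is smaller than `(1 + 2p)²`. Since all prime
factors of `Φ_p(4)` are `≡ 1 mod 2p`, such a divisor is `1` or a prime `1 + 2pm`, and comparing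
sizes and residues rules out `m ≥ 2`.
-/

/-! ### Gaussian periods -/

section CyclicGenerator

variable {F R : Type*} [Field F] [Fintype F] [CommRing R] {θ : F}

lemma sum_eq_zero_add_sum_pow {M : Type*} [AddCommMonoid M]
    (hθ : IsPrimitiveRoot θ (Fintype.card F - 1)) (f : F → M) :
    ∑ a, f a = f 0 + ∑ n ∈ range (Fintype.card F - 1), f (θ ^ n) := by
  classical
  have := NeZero.mk (Nat.sub_pos_of_lt (Fintype.one_lt_card (α := F))).ne'
  rw [← add_sum_erase univ f (mem_univ 0)]
  congr 1
  symm
  refine sum_bij (fun n _ ↦ θ ^ n) (fun n _ ↦ ?_) (fun m hm n hn h ↦ ?_) (fun a ha ↦ ?_)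
    fun _ _ ↦ rfl
  · simpa using pow_ne_zero n (hθ.isUnit NeZero.out).ne_zero
  · exact hθ.pow_inj (mem_range.1 hm) (mem_range.1 hn) h
  · have ha1 := FiniteField.pow_card_sub_one_eq_one a (ne_of_mem_erase ha)
    obtain ⟨n, hn, h⟩ := hθ.eq_pow_of_pow_eq_one ha1
    exact ⟨n, mem_range.2 hn, h⟩

lemma exists_unit_generator (hθ : IsPrimitiveRoot θ (Fintype.card F - 1)) :
    ∃ g : Fˣ, (g : F) = θ ∧ ∀ x, x ∈ Subgroup.zpowers g := by
  classical
  have hcard : Fintype.card F - 1 ≠ 0 := (Nat.sub_pos_of_lt Fintype.one_lt_card).ne'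
  obtain ⟨g, rfl⟩ := hθ.isUnit hcard
  refine ⟨g, rfl, fun x ↦ ?_⟩
  have htop : Subgroup.zpowers g = ⊤ := by
    apply Subgroup.eq_top_of_card_eq
    rw [Nat.card_zpowers, ← orderOf_units, ← hθ.eq_orderOf, Nat.card_eq_fintype_card,
      Fintype.card_units]
  exact htop ▸ Subgroup.mem_top x

lemma mulChar_ext_of_isPrimitiveRoot (hθ : IsPrimitiveRoot θ (Fintype.card F - 1))
    {χ φ : MulChar F R} (h : χ θ = φ θ) : χ = φ := by
  obtain ⟨g, rfl, hg⟩ := exists_unit_generator hθ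
  exact (MulChar.eq_iff hg χ φ).2 h

lemma exists_mulChar_apply_eq (hθ : IsPrimitiveRoot θ (Fintype.card F - 1)) {ω : R}
    (hω : ω ^ (Fintype.card F - 1) = 1) : ∃ χ : MulChar F R, χ θ = ω := by
  classical
  obtain ⟨g, rfl, hg⟩ := exists_unit_generator hθ
  have hcard : Fintype.card F - 1 ≠ 0 := (Nat.sub_pos_of_lt Fintype.one_lt_card).ne'
  obtain ⟨w, rfl⟩ := IsUnit.of_pow_eq_one hω hcard
  have hw : w ∈ rootsOfUnity (Fintype.card Fˣ) R := by
    rw [mem_rootsOfUnity', Fintype.card_units]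
    exact hω
  exact ⟨MulChar.ofRootOfUnity hw hg, MulChar.ofRootOfUnity_spec hw hg⟩

lemma pow_card_sub_one_div_two_eq_neg_one (hθ : IsPrimitiveRoot θ (Fintype.card F - 1))
    (hF : Odd (Fintype.card F)) : θ ^ ((Fintype.card F - 1) / 2) = -1 := by
  obtain ⟨k, hk⟩ := hF
  have hk0 : k ≠ 0 := by have := Fintype.one_lt_card (α := F); lia
  have h2k : Fintype.card F - 1 = k * 2 := by lia
  rw [h2k] at hθ ⊢
  rw [Nat.mul_div_cancel _ two_pos]
  exact (hθ.pow (by lia) rfl).eq_neg_one_of_two_right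

/-- The Gaussian period `η_i = ∑_{n ≡ i mod e} ψ (θ ^ n)` of order `e`, the sum of the additive
character `ψ` over the cyclotomic class `θ ^ i ⟨θ ^ e⟩` when `θ` generates `Fˣ` and `e ∣ #Fˣ`. -/
def gaussPeriod (ψ : AddChar F R) (θ : F) (e i : ℕ) : R :=
  ∑ n ∈ range (Fintype.card F - 1) with n % e = i, ψ (θ ^ n)

lemma sum_mul_gaussPeriod (ψ : AddChar F R) (θ : F) {e : ℕ} (he : 0 < e) (w : ℕ → R) :
    ∑ i ∈ range e, w i * gaussPeriod ψ θ e i =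
      ∑ n ∈ range (Fintype.card F - 1), w (n % e) * ψ (θ ^ n) := by
  rw [← sum_fiberwise_of_maps_to (s := range (Fintype.card F - 1))
    fun n _ ↦ mem_range.2 (Nat.mod_lt n he)]
  refine sum_congr rfl fun i _ ↦ ?_
  rw [gaussPeriod, mul_sum]
  refine sum_congr rfl fun n hn ↦ ?_
  rw [(mem_filter.1 hn).2]

lemma gaussSum_eq_sum_gaussPeriod [Nontrivial R] (hθ : IsPrimitiveRoot θ (Fintype.card F - 1))
    {χ : MulChar F R} {e : ℕ} (he : 0 < e) (hχ : χ θ ^ e = 1) (ψ : AddChar F R) :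
    gaussSum χ ψ = ∑ i ∈ range e, χ θ ^ i * gaussPeriod ψ θ e i := by
  rw [sum_mul_gaussPeriod ψ θ he, gaussSum, sum_eq_zero_add_sum_pow hθ, MulChar.map_zero,
    zero_mul, zero_add]
  refine sum_congr rfl fun n _ ↦ ?_
  rw [map_pow, pow_eq_pow_mod n hχ]

lemma sum_gaussPeriod [IsDomain R] (hθ : IsPrimitiveRoot θ (Fintype.card F - 1))
    {ψ : AddChar F R} (hψ : ψ ≠ 1) {e : ℕ} (he : 0 < e) :
    ∑ i ∈ range e, gaussPeriod ψ θ e i = -1 := by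
  have hθ1 : (1 : MulChar F R) θ = 1 :=
    MulChar.one_apply (hθ.isUnit (Nat.sub_pos_of_lt Fintype.one_lt_card).ne')
  have := gaussSum_eq_sum_gaussPeriod hθ he (by rw [hθ1, one_pow]) ψ
  simpa only [gaussSum_one_left hψ, hθ1, one_pow, one_mul] using this.symm

lemma gaussSum_mul_gaussSum_inv [IsDomain R] {χ : MulChar F R} (hχ : χ ≠ 1) {ψ : AddChar F R}
    (hψ : ψ.IsPrimitive) : gaussSum χ ψ * gaussSum χ⁻¹ ψ = χ (-1) * Fintype.card F := by
  have hinv : χ⁻¹ (-1) = χ (-1) := by rw [MulChar.inv_apply', inv_neg_one]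
  rw [← mul_gaussSum_inv_eq_gaussSum χ⁻¹ ψ, hinv, mul_left_comm,
    gaussSum_mul_gaussSum_eq_card hχ hψ]

end CyclicGenerator

/-! ### Quartic Gauss and Jacobi sums -/

section JacobiSum

open Complex

variable {F : Type*} [Field F] [Fintype F]

lemma jacobiSum_inv_inv (χ φ : MulChar F ℂ) :
    jacobiSum χ⁻¹ φ⁻¹ = starRingEnd ℂ (jacobiSum χ φ) := by
  rw [← jacobiSum_ringHomComp, ← MulChar.star_eq_inv, ← MulChar.star_eq_inv]
  rfl

lemma exists_jacobiSum_eq_add_mul_I {χ φ : MulChar F ℂ} (hχ : χ ^ 4 = 1) (hφ : φ ^ 4 = 1) :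
    ∃ a b : ℤ, jacobiSum χ φ = a + b * I := by
  have hI : IsPrimitiveRoot I 4 := isPrimitiveRoot_I
  have hmem := jacobiSum_mem_algebraAdjoin_of_pow_eq_one hχ hφ hI
  refine Algebra.adjoin_induction (p := fun z _ ↦ ∃ a b : ℤ, z = a + b * I) ?_ ?_ ?_ ?_ hmem
  · rintro _ rfl
    exact ⟨0, 1, by simp⟩
  · exact fun n ↦ ⟨n, 0, by simp⟩
  · rintro _ _ _ _ ⟨a, b, rfl⟩ ⟨c, d, rfl⟩
    exact ⟨a + c, b + d, by push_cast; ring⟩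
  · rintro _ _ _ _ ⟨a, b, rfl⟩ ⟨c, d, rfl⟩
    exact ⟨a * c - b * d, a * d + b * c, by push_cast; linear_combination b * d * I_sq⟩

lemma sq_add_sq_eq_card_of_jacobiSum_eq {χ φ : MulChar F ℂ} (hχ : χ ≠ 1) (hφ : φ ≠ 1)
    (hχφ : χ * φ ≠ 1) {a b : ℤ} (h : jacobiSum χ φ = a + b * I) :
    a ^ 2 + b ^ 2 = Fintype.card F := by
  have hchar : ringChar ℂ ≠ ringChar F := by
    rw [ringChar.eq_zero]
    exact (CharP.ringChar_ne_zero_of_finite F).symm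
  have hnorm := jacobiSum_mul_jacobiSum_inv hchar hχ hφ hχφ
  rw [jacobiSum_inv_inv, h] at hnorm
  simp only [map_add, map_mul, conj_I, map_intCast] at hnorm
  exact_mod_cast (by linear_combination hnorm + b ^ 2 * I_sq :
    (a : ℂ) ^ 2 + (b : ℂ) ^ 2 = Fintype.card F)

lemma exists_sq_gaussSum_sub_sq_gaussSum_inv {χ : MulChar F ℂ} (hχ : χ ^ 4 = 1)
    (hχ2 : χ ^ 2 ≠ 1) (ψ : AddChar F ℂ) :
    ∃ b : ℤ, b ^ 2 ≤ Fintype.card F ∧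
      gaussSum χ ψ ^ 2 - gaussSum χ⁻¹ ψ ^ 2 = 2 * b * I * gaussSum (χ ^ 2) ψ := by
  have hχ1 : χ ≠ 1 := by
    rintro rfl
    exact hχ2 (one_pow 2)
  have hinv : χ⁻¹ ^ 2 = χ ^ 2 := by
    rw [inv_pow, inv_eq_iff_mul_eq_one, ← pow_add, hχ]
  obtain ⟨a, b, hab⟩ := exists_jacobiSum_eq_add_mul_I hχ hχ
  have hnorm := sq_add_sq_eq_card_of_jacobiSum_eq hχ1 hχ1 (sq χ ▸ hχ2) hab
  refine ⟨b, by linarith [sq_nonneg a], ?_⟩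
  have hG := jacobiSum_mul_nontrivial (χ := χ) (φ := χ) (sq χ ▸ hχ2) ψ
  have hG_inv := jacobiSum_mul_nontrivial (χ := χ⁻¹) (φ := χ⁻¹) (by rwa [← sq, hinv]) ψ
  have hconj : starRingEnd ℂ (a + b * I) = a - b * I := by simp [sub_eq_add_neg]
  rw [jacobiSum_inv_inv, hab, hconj, ← sq, ← sq, hinv] at hG_inv
  rw [hab, ← sq, ← sq] at hG
  linear_combination hG_inv - hG

end JacobiSum

section QuarticPeriods

open Complex

variable {F : Type*} [Field F] [Fintype F] {θ : F}

lemma mulChar_neg_one_eq_neg_one_of_apply_eq_I (hθ : IsPrimitiveRoot θ (Fintype.card F - 1))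
    (hF : Fintype.card F % 8 = 5) {χ : MulChar F ℂ} (hχ : χ θ = I) : χ (-1) = -1 := by
  have hhalf : (Fintype.card F - 1) / 2 % 4 = 2 := by lia
  rw [← pow_card_sub_one_div_two_eq_neg_one hθ (Nat.odd_iff.2 (by lia)), map_pow, hχ,
    pow_eq_pow_mod _ I_pow_four, hhalf, I_sq]

lemma mulChar_pow_four_eq_one_of_apply_eq_I (hθ : IsPrimitiveRoot θ (Fintype.card F - 1))
    {χ : MulChar F ℂ} (hχ : χ θ = I) : χ ^ 4 = 1 := by
  have hθ0 : IsUnit θ := hθ.isUnit (Nat.sub_pos_of_lt Fintype.one_lt_card).ne'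
  apply mulChar_ext_of_isPrimitiveRoot hθ
  rw [MulChar.pow_apply' _ four_ne_zero, hχ, I_pow_four, MulChar.one_apply hθ0]

lemma mulChar_sq_ne_one_of_apply_eq_I (hθ : IsPrimitiveRoot θ (Fintype.card F - 1))
    {χ : MulChar F ℂ} (hχ : χ θ = I) : χ ^ 2 ≠ 1 := by
  have hθ0 : IsUnit θ := hθ.isUnit (Nat.sub_pos_of_lt Fintype.one_lt_card).ne'
  intro h
  have hχ_sq : (χ ^ 2) θ = -1 := by rw [MulChar.pow_apply' _ two_ne_zero, hχ, I_sq]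
  rw [h, MulChar.one_apply hθ0] at hχ_sq
  norm_num at hχ_sq

lemma gaussSum_eq_of_apply_pow_four (hθ : IsPrimitiveRoot θ (Fintype.card F - 1))
    {φ : MulChar F ℂ} (hφ : φ θ ^ 4 = 1) (ψ : AddChar F ℂ) :
    gaussSum φ ψ = gaussPeriod ψ θ 4 0 + φ θ * gaussPeriod ψ θ 4 1
      + φ θ ^ 2 * gaussPeriod ψ θ 4 2 + φ θ ^ 3 * gaussPeriod ψ θ 4 3 := by
  rw [gaussSum_eq_sum_gaussPeriod hθ (by norm_num) hφ]
  simp only [sum_range_succ, range_zero, sum_empty, zero_add, pow_zero, one_mul, pow_one]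

lemma exists_gaussPeriod_four_relations (hθ : IsPrimitiveRoot θ (Fintype.card F - 1))
    (hF : Fintype.card F % 8 = 5) {ψ : AddChar F ℂ} (hψ : ψ.IsPrimitive) {η : ℕ → ℂ}
    (hη : gaussPeriod ψ θ 4 = η) :
    ∃ b : ℤ, b ^ 2 ≤ Fintype.card F ∧
      (η 0 - η 2) ^ 2 + (η 1 - η 3) ^ 2 = -Fintype.card F ∧
      (η 0 - η 1 + η 2 - η 3) ^ 2 = Fintype.card F ∧
      2 * ((η 0 - η 2) * (η 1 - η 3)) = b * (η 0 - η 1 + η 2 - η 3) := by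
  obtain ⟨χ, hχ⟩ := exists_mulChar_apply_eq hθ (ω := I)
    (by rw [pow_eq_pow_mod _ I_pow_four, show (Fintype.card F - 1) % 4 = 0 by lia, pow_zero])
  have hχ_neg : χ (-1) = -1 := mulChar_neg_one_eq_neg_one_of_apply_eq_I hθ hF hχ
  have hχ_inv : χ⁻¹ θ = -I := by rw [MulChar.inv_apply_eq_inv', hχ, inv_I]
  have hχ_sq : (χ ^ 2) θ = -1 := by rw [MulChar.pow_apply' _ two_ne_zero, hχ, I_sq]
  have hχ_pow : χ ^ 4 = 1 := mulChar_pow_four_eq_one_of_apply_eq_I hθ hχ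
  have hχ2 : χ ^ 2 ≠ 1 := mulChar_sq_ne_one_of_apply_eq_I hθ hχ
  have hχ1 : χ ≠ 1 := fun h ↦ hχ2 (by rw [h, one_pow])
  have hχ2_inv : (χ ^ 2)⁻¹ = χ ^ 2 := by rw [inv_eq_iff_mul_eq_one, ← pow_add, hχ_pow]
  have hG : gaussSum χ ψ = (η 0 - η 2) + I * (η 1 - η 3) := by
    rw [gaussSum_eq_of_apply_pow_four hθ (by rw [hχ, I_pow_four]), hχ, hη, I_sq, I_pow_three]
    ring
  have hG_inv : gaussSum χ⁻¹ ψ = (η 0 - η 2) - I * (η 1 - η 3) := by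
    rw [gaussSum_eq_of_apply_pow_four hθ (by rw [hχ_inv, neg_pow, I_pow_four]; norm_num), hχ_inv,
      hη]
    linear_combination (η 2 - I * η 3) * I_sq
  have hG_sq : gaussSum (χ ^ 2) ψ = η 0 - η 1 + η 2 - η 3 := by
    rw [gaussSum_eq_of_apply_pow_four hθ (by rw [hχ_sq]; norm_num), hχ_sq, hη]
    ring
  obtain ⟨b, hb, hb_eq⟩ := exists_sq_gaussSum_sub_sq_gaussSum_inv hχ_pow hχ2 ψ
  have hnorm := gaussSum_mul_gaussSum_inv hχ1 hψ
  have hnorm_sq := gaussSum_mul_gaussSum_inv hχ2 hψ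
  rw [hG, hG_inv, hχ_neg] at hnorm
  rw [hχ2_inv, hG_sq, MulChar.pow_apply' _ two_ne_zero, hχ_neg] at hnorm_sq
  rw [hG, hG_inv, hG_sq] at hb_eq
  refine ⟨b, hb, ?_, ?_, mul_left_cancel₀ (mul_ne_zero two_ne_zero I_ne_zero) ?_⟩
  · linear_combination hnorm + (η 1 - η 3) ^ 2 * I_sq
  · linear_combination hnorm_sq
  · linear_combination hb_eq

lemma gaussPeriod_four_combination_mul {R : Type*} [CommRing R] {η : ℕ → R} {q b r : R}
    (hsum : η 0 + η 1 + η 2 + η 3 = -1) (hr : η 0 - η 1 + η 2 - η 3 = r) (hr2 : r ^ 2 = q)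
    (hnorm : (η 0 - η 2) ^ 2 + (η 1 - η 3) ^ 2 = -q)
    (hprod : 2 * ((η 0 - η 2) * (η 1 - η 3)) = b * r) :
    4 * ((3 + η 1 + 2 * η 2 + 3 * η 3) * (3 + η 3 + 2 * η 0 + 3 * η 1)) =
      9 + 5 * q - (6 + 4 * b) * r := by
  have hA : 6 + 2 * (η 0 + η 2) + 4 * (η 1 + η 3) = 3 - r := by
    linear_combination 3 * hsum - hr
  calc 4 * ((3 + η 1 + 2 * η 2 + 3 * η 3) * (3 + η 3 + 2 * η 0 + 3 * η 1))
      = (6 + 2 * (η 0 + η 2) + 4 * (η 1 + η 3)) ^ 2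
        - 4 * ((η 0 - η 2) + (η 1 - η 3)) ^ 2 := by ring
    _ = (3 - r) ^ 2 - 4 * (-q + b * r) := by
      rw [hA]
      linear_combination -4 * (hnorm + hprod)
    _ = 9 + 5 * q - (6 + 4 * b) * r := by linear_combination hr2

/-- Sixteen times the norm of `3 + η₁ + 2η₂ + 3η₃` from the quartic subfield of `ℚ(ζ_p)`, where
`η_i` are the quartic Gaussian periods, `p ≡ 5 mod 8`, and `b` is the imaginary part of the Jacobi
sum `J(χ, χ)` of the quartic character `χ` that defines them. -/
def quarticNorm (p b : ℤ) : ℤ := (9 + 5 * p) ^ 2 - p * (6 + 4 * b) ^ 2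

/-- The factor `3 + η₃ + 2η₀ + 3η₁` is the conjugate of `3 + η₁ + 2η₂ + 3η₃` under
`η_i ↦ η_{i+2}`. Their product lies in the quadratic subfield, which is generated by the square root
`η₀ - η₁ + η₂ - η₃` of `#F`. -/
lemma exists_gaussPeriod_combination_mul_eq_quarticNorm
    (hθ : IsPrimitiveRoot θ (Fintype.card F - 1)) (hF : Fintype.card F % 8 = 5)
    {ψ : AddChar F ℂ} (hψ : ψ.IsPrimitive) {η : ℕ → ℂ} (hη : gaussPeriod ψ θ 4 = η) :
    ∃ b : ℤ, b ^ 2 ≤ Fintype.card F ∧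
      (3 + η 1 + 2 * η 2 + 3 * η 3) * (4 * (3 + η 3 + 2 * η 0 + 3 * η 1) *
        (9 + 5 * Fintype.card F + (6 + 4 * b) * (η 0 - η 1 + η 2 - η 3))) =
      quarticNorm (Fintype.card F) b := by
  have hψ1 : ψ ≠ 1 := by simpa using hψ one_ne_zero
  obtain ⟨b, hb, hnorm, hr2, hprod⟩ := exists_gaussPeriod_four_relations hθ hF hψ hη
  have hsum : η 0 + η 1 + η 2 + η 3 = -1 := by
    rw [← hη, ← sum_gaussPeriod hθ hψ1 (e := 4) (by norm_num)]
    simp only [sum_range_succ, range_zero, sum_empty, zero_add]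
  have hmul := gaussPeriod_four_combination_mul hsum rfl hr2 hnorm hprod
  refine ⟨b, hb, ?_⟩
  unfold quarticNorm
  push_cast
  linear_combination
    (9 + 5 * Fintype.card F + (6 + 4 * b) * (η 0 - η 1 + η 2 - η 3)) * hmul -
      (6 + 4 * b) ^ 2 * hr2

end QuarticPeriods

/-! ### Common divisors of the quartic norm and of `Φ_p(4)` -/

lemma natCast_pow_eq_one_of_dvd_geomSum {q n k : ℕ} (hq : q ∣ ∑ i ∈ range k, n ^ i) :
    (n : ZMod q) ^ k = 1 := by
  have hsum : ∑ i ∈ range k, (n : ZMod q) ^ i = 0 := by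
    exact_mod_cast (ZMod.natCast_eq_zero_iff _ q).2 hq
  rw [← sub_eq_zero, ← geom_sum_mul, hsum, zero_mul]

lemma orderOf_natCast_eq_of_dvd_geomSum {p q n : ℕ} [Fact p.Prime] [Fact q.Prime]
    (hn : (n : ZMod p) ≠ 1) (hq : q ∣ ∑ i ∈ range p, n ^ i) : orderOf (n : ZMod q) = p := by
  refine orderOf_eq_prime (natCast_pow_eq_one_of_dvd_geomSum hq) fun hn1 ↦ hn ?_
  have hqp : q ∣ p := (ZMod.natCast_eq_zero_iff p q).1
    (by simpa [hn1] using (ZMod.natCast_eq_zero_iff _ q).2 hq)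
  obtain rfl := (Nat.prime_dvd_prime_iff_eq Fact.out Fact.out).1 hqp
  exact hn1

lemma modEq_one_of_prime_dvd_geomSum {p q n : ℕ} [Fact p.Prime] [Fact q.Prime] (hp2 : p ≠ 2)
    (hn2 : Even n) (hn : (n : ZMod p) ≠ 1) (hq : q ∣ ∑ i ∈ range p, n ^ i) :
    q ≡ 1 [MOD 2 * p] := by
  have hp : p.Prime := Fact.out
  have hord := orderOf_natCast_eq_of_dvd_geomSum hn hq
  have hn0 : (n : ZMod q) ≠ 0 := by
    intro h
    rw [h, orderOf_zero] at hord
    exact hp.ne_zero hord.symm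
  have hq2 : q ≠ 2 := by
    rintro rfl
    exact hn0 ((ZMod.natCast_eq_zero_iff_even).2 hn2)
  have hdvd : p ∣ q - 1 :=
    hord ▸ orderOf_dvd_of_pow_eq_one (ZMod.pow_card_sub_one_eq_one hn0)
  have hqodd : q ≡ 1 [MOD 2] := Nat.odd_iff.1 (Nat.Prime.odd_of_ne_two Fact.out hq2)
  have hqp : q ≡ 1 [MOD p] :=
    ((Nat.modEq_iff_dvd' (Nat.Prime.one_le Fact.out)).2 hdvd).symm
  have hcop : Nat.Coprime 2 p := (Nat.coprime_primes Nat.prime_two hp).2 hp2.symm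
  exact (Nat.modEq_and_modEq_iff_modEq_mul hcop).1 ⟨hqodd, hqp⟩

lemma mod_eight_ne_five_of_four_pow_eq_one {p q : ℕ} [Fact q.Prime] (hp : Odd p)
    (h : (4 : ZMod q) ^ p = 1) : q % 8 ≠ 5 := by
  intro hq
  obtain ⟨j, rfl⟩ := hp
  have hsq : ((2 : ZMod q) ^ (2 * j + 1)) ^ 2 = 1 := by
    rw [← h, ← pow_mul, mul_comm, pow_mul]
    norm_num
  rcases sq_eq_one_iff.1 hsq with h1 | h1
  · have : IsSquare (2 : ZMod q) := ⟨2 ^ (j + 1), by linear_combination -2 * h1⟩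
    rw [ZMod.exists_sq_eq_two_iff (by lia)] at this
    lia
  · have : IsSquare (-2 : ZMod q) := ⟨2 ^ (j + 1), by linear_combination -2 * h1⟩
    rw [ZMod.exists_sq_eq_neg_two_iff (by lia)] at this
    lia

lemma quarticNorm_eq_add (p b : ℤ) :
    quarticNorm p b = (p - 9) ^ 2 + 8 * p * (b - 3) ^ 2 + 24 * p * (p - b ^ 2) := by
  unfold quarticNorm
  ring

lemma quarticNorm_pos {p b : ℤ} (hp : 0 ≤ p) (hp9 : p ≠ 9) (hb : b ^ 2 ≤ p) :
    0 < quarticNorm p b := by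
  have hp9' : 0 < (p - 9) ^ 2 := sq_pos_of_ne_zero (sub_ne_zero.2 hp9)
  have hb' : 0 ≤ 24 * p * (p - b ^ 2) := mul_nonneg (by positivity) (sub_nonneg.2 hb)
  have hmid : 0 ≤ 8 * p * (b - 3) ^ 2 := by positivity
  rw [quarticNorm_eq_add]
  linarith

lemma sixteen_dvd_quarticNorm {p : ℤ} (hp : p % 4 = 1) (b : ℤ) : 16 ∣ quarticNorm p b := by
  obtain ⟨k, rfl⟩ : ∃ k, p = 4 * k + 1 := ⟨p / 4, by lia⟩
  refine ⟨10 + 26 * k + 25 * k ^ 2 - 12 * k * b - 4 * k * b ^ 2 - 3 * b - b ^ 2, ?_⟩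
  unfold quarticNorm
  ring

lemma quarticNorm_lt {p : ℤ} (hp : 2 ≤ p) (b : ℤ) :
    quarticNorm p b < 16 * (1 + 2 * p) ^ 2 := by
  have : 0 ≤ p * (6 + 4 * b) ^ 2 := by positivity
  unfold quarticNorm
  nlinarith

/-- Modulo `p` the norm is `81`, so the cofactor has the form `16 k = 81 + p l`, and comparing
sizes leaves only `l = 3` once `p > 13`. -/
lemma quarticNorm_cofactor_cases {p m k b : ℤ} (hp : 0 < p) (hp8 : p % 8 = 5) (hm : 2 ≤ m)
    (hk : 0 < k) (h : quarticNorm p b = 16 * ((1 + 2 * p * m) * k)) :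
    16 * k = 81 + 3 * p ∧ m ≤ 4 ∨ p = 5 ∧ k = 1 ∨ p = 13 ∧ k = 1 := by
  obtain ⟨l, hl⟩ : ∃ l, l = 90 + 25 * p - 4 * (2 * b + 3) ^ 2 - 32 * (m * k) := ⟨_, rfl⟩
  have hkl : 16 * k = 81 + p * l := by
    rw [hl]
    unfold quarticNorm at h
    linear_combination -h
  have hsize : l + 2 * m * (81 + p * l) ≤ 90 + 25 * p := by
    have := sq_nonneg (2 * b + 3)
    rw [← hkl]
    linarith
  have hlower : -13 ≤ l := by
    have hp5 : 5 ≤ p := by lia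
    by_contra! hl14
    nlinarith
  have hupper : 0 ≤ l → m * l ≤ 12 := by
    intro h0
    by_contra! hml
    nlinarith [mul_le_mul_of_nonneg_right (Int.add_one_le_iff.2 hml) hp.le]
  have hl6 : l ≤ 6 := by
    by_contra! hl7
    nlinarith [hupper (by lia)]
  have hl3 : l = 3 ∨ p = 5 ∧ k = 1 ∨ p = 13 ∧ k = 1 := by
    clear hl h hupper hsize
    interval_cases l <;> lia
  rcases hl3 with rfl | hsmall
  · exact Or.inl ⟨by linarith, by linarith [hupper (by norm_num)]⟩
  · exact Or.inr hsmall

lemma modEq_one_of_prime_dvd_geomSum_four {p q : ℕ} (hp : p.Prime) (hp3 : 3 < p)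
    (hq : q.Prime) (hqG : q ∣ ∑ i ∈ range p, 4 ^ i) : q ≡ 1 [MOD 2 * p] := by
  have := Fact.mk hp
  have := Fact.mk hq
  refine modEq_one_of_prime_dvd_geomSum (by lia) (n := 4) (by decide) (fun h ↦ ?_) hqG
  have h3 : ((3 : ℕ) : ZMod p) = 0 := by push_cast at h ⊢; linear_combination h
  exact absurd (Nat.le_of_dvd (by norm_num) ((ZMod.natCast_eq_zero_iff 3 p).1 h3)) (by lia)

lemma one_add_two_mul_le_of_modEq_one {p q : ℕ} (hq : 1 < q) (h : q ≡ 1 [MOD 2 * p]) :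
    1 + 2 * p ≤ q := by
  have := Nat.le_of_dvd (by lia) ((Nat.modEq_iff_dvd' hq.le).1 h.symm)
  lia

lemma prime_of_dvd_geomSum_four_of_lt_sq {p d : ℕ} (hp : p.Prime) (hp3 : 3 < p)
    (hd1 : 1 < d) (hdG : d ∣ ∑ i ∈ range p, 4 ^ i) (hd : d < (1 + 2 * p) ^ 2) : d.Prime := by
  by_contra hdp
  have hq := Nat.minFac_prime hd1.ne'
  have hle : 1 + 2 * p ≤ d.minFac := one_add_two_mul_le_of_modEq_one hq.one_lt <|
    modEq_one_of_prime_dvd_geomSum_four hp hp3 hq ((Nat.minFac_dvd d).trans hdG)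
  have := Nat.pow_le_pow_left hle 2
  have := Nat.minFac_sq_le_self (by lia) hdp
  lia

lemma four_mul_sq_add_eq_of_quarticNorm_eq {p m k b : ℤ} (hp : p ≠ 0) (hk : 16 * k = 81 + 3 * p)
    (h : quarticNorm p b = 16 * ((1 + 2 * p * m) * k)) :
    4 * (2 * b + 3) ^ 2 + 2 * m * (81 + 3 * p) = 87 + 25 * p := by
  apply mul_left_cancel₀ hp
  unfold quarticNorm at h
  linear_combination -h + (-1 - 2 * p * m) * hk

lemma seven_dvd_of_four_mul_sq_add_eq {p c : ℤ}
    (h : 4 * c ^ 2 + 2 * 3 * (81 + 3 * p) = 87 + 25 * p) : 7 ∣ 1 + 2 * p * 3 := by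
  have hc : 7 ∣ c := Int.Prime.dvd_pow' (p := 7) (k := 2) (by norm_num) (by lia)
  obtain ⟨e, rfl⟩ := hc
  exact ⟨49 + 24 * e ^ 2, by linarith⟩

lemma three_dvd_of_four_mul_sq_add_eq {p c : ℤ}
    (h : 4 * c ^ 2 + 2 * 4 * (81 + 3 * p) = 87 + 25 * p) : 3 ∣ p ∨ 3 ∣ 1 + 2 * p * 4 := by
  obtain rfl : p = 561 + 4 * c ^ 2 := by linarith
  have hc : c ^ 2 % 3 = 0 ∨ c ^ 2 % 3 = 1 := by
    have : c % 3 = 0 ∨ c % 3 = 1 ∨ c % 3 = 2 := by lia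
    rcases this with h | h | h <;> simp [pow_two, Int.mul_emod, h]
  lia

lemma le_of_dvd_geomSum_four_five_of_eq_quarticNorm {q : ℕ} (hq : q.Prime)
    (hqG : q ∣ ∑ i ∈ range 5, 4 ^ i) {b : ℤ} (h : quarticNorm 5 b = 16 * q) : q ≤ 11 := by
  have hfactor : ∑ i ∈ range 5, 4 ^ i = 11 * 31 := by decide
  rw [hfactor, hq.dvd_mul, Nat.prime_dvd_prime_iff_eq hq (by norm_num),
    Nat.prime_dvd_prime_iff_eq hq (by norm_num)] at hqG
  rcases hqG with rfl | rfl
  · rfl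
  · unfold quarticNorm at h
    push_cast at h
    have hsq : IsSquare (33 : ℤ) := ⟨2 * b + 3, by linarith⟩
    norm_num at hsq

lemma quarticNorm_thirteen_ne {q : ℕ} (hq : q.Prime) (hqG : q ∣ ∑ i ∈ range 13, 4 ^ i) (b : ℤ) :
    quarticNorm 13 b ≠ 16 * q := by
  have hfactor : ∑ i ∈ range 13, 4 ^ i = 2731 * 8191 := by decide
  rw [hfactor, hq.dvd_mul, Nat.prime_dvd_prime_iff_eq hq (by norm_num),
    Nat.prime_dvd_prime_iff_eq hq (by norm_num)] at hqG
  have hlt := quarticNorm_lt (p := 13) (by norm_num) b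
  rcases hqG with rfl | rfl <;> norm_num at hlt ⊢ <;> lia

lemma quarticNorm_ne_of_cofactor {p q : ℕ} (hp : p.Prime) (hp8 : p % 8 = 5) (hq : q.Prime)
    (hqG : q ∣ ∑ i ∈ range p, 4 ^ i) {m : ℕ} (hqm : q = 1 + 2 * p * m) (hm2 : 2 ≤ m) (hm4 : m ≤ 4)
    {b k : ℤ} (hk : 16 * k = 81 + 3 * p) : quarticNorm p b ≠ 16 * (q * k) := by
  intro h
  have hqm' : (q : ℤ) = 1 + 2 * p * m := by exact_mod_cast hqm
  rw [hqm'] at h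
  have hS := four_mul_sq_add_eq_of_quarticNorm_eq (by exact_mod_cast hp.ne_zero) hk h
  obtain rfl | rfl | rfl : m = 2 ∨ m = 3 ∨ m = 4 := by lia
  · have := Fact.mk hq
    have h4 : (4 : ZMod q) ^ p = 1 := by exact_mod_cast natCast_pow_eq_one_of_dvd_geomSum hqG
    exact mod_eight_ne_five_of_four_pow_eq_one (Nat.odd_iff.2 (by lia)) h4 (by lia)
  · have h7 : 7 ∣ q := by have := seven_dvd_of_four_mul_sq_add_eq hS; lia
    have := (Nat.prime_dvd_prime_iff_eq (by norm_num) hq).1 h7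
    lia
  · rcases three_dvd_of_four_mul_sq_add_eq hS with h3 | h3
    · have := (Nat.prime_dvd_prime_iff_eq Nat.prime_three hp).1 (by exact_mod_cast h3)
      lia
    · have := (Nat.prime_dvd_prime_iff_eq Nat.prime_three hq).1 (by lia)
      lia

lemma le_of_prime_dvd_geomSum_four_of_dvd_quarticNorm {p q : ℕ} (hp : p.Prime) (hp8 : p % 8 = 5)
    (hq : q.Prime) (hqG : q ∣ ∑ i ∈ range p, 4 ^ i) {b : ℤ} (hb : b ^ 2 ≤ p)
    (hqN : 16 * (q : ℤ) ∣ quarticNorm p b) : q ≤ 1 + 2 * p := by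
  have hmod := modEq_one_of_prime_dvd_geomSum_four hp (by lia) hq hqG
  obtain ⟨m, hm⟩ := (Nat.modEq_iff_dvd' hq.one_le).1 hmod.symm
  have hqm : q = 1 + 2 * p * m := by have := hq.one_le; lia
  by_contra! hlt
  have hm2 : 2 ≤ m := by
    by_contra! hm1
    obtain rfl | rfl : m = 0 ∨ m = 1 := by lia
    all_goals lia
  obtain ⟨k, hk⟩ := hqN
  have hk0 : 0 < k := by
    have hpos := quarticNorm_pos (by positivity) (by lia) hb
    rw [hk] at hpos
    exact pos_of_mul_pos_right hpos (by positivity)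
  rw [mul_assoc] at hk
  have hk' : quarticNorm p b = 16 * ((1 + 2 * p * m) * k) := by rw [hk, hqm]; push_cast; rfl
  rcases quarticNorm_cofactor_cases (by exact_mod_cast hp.pos) (by lia) (by lia) hk0 hk' with
    ⟨hk16, hm4⟩ | ⟨hp5, rfl⟩ | ⟨hp13, rfl⟩
  · exact quarticNorm_ne_of_cofactor hp hp8 hq hqG hqm hm2 (by lia) hk16 hk
  · obtain rfl : p = 5 := by lia
    have := le_of_dvd_geomSum_four_five_of_eq_quarticNorm hq hqG (by simpa using hk)
    lia
  · obtain rfl : p = 13 := by lia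
    exact quarticNorm_thirteen_ne hq hqG b (by simpa using hk)

lemma le_of_dvd_geomSum_four_of_dvd_quarticNorm {p d : ℕ} (hp : p.Prime) (hp8 : p % 8 = 5)
    (hdG : d ∣ ∑ i ∈ range p, 4 ^ i) {b : ℤ} (hb : b ^ 2 ≤ p)
    (hdN : (d : ℤ) ∣ quarticNorm p b) : d ≤ 1 + 2 * p := by
  have hodd : Odd d := by
    by_contra heven
    have h2d : 2 ∣ d := even_iff_two_dvd.1 (Nat.not_odd_iff_even.1 heven)
    have := one_add_two_mul_le_of_modEq_one one_lt_two <|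
      modEq_one_of_prime_dvd_geomSum_four hp (by lia) Nat.prime_two (h2d.trans hdG)
    lia
  have hcop : IsCoprime (16 : ℤ) d := by
    have := (Nat.coprime_two_left.2 hodd).pow_left 4
    exact Nat.isCoprime_iff_coprime.2 this
  have hN : 16 * (d : ℤ) ∣ quarticNorm p b :=
    hcop.mul_dvd (sixteen_dvd_quarticNorm (by lia) b) hdN
  have hlt : d < (1 + 2 * p) ^ 2 := by
    have hle := Int.le_of_dvd (quarticNorm_pos (by positivity) (by lia) hb) hN
    have := quarticNorm_lt (p := p) (by lia) b
    zify
    linarith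
  rcases le_or_gt d 1 with hd1 | hd1
  · lia
  · have hd := prime_of_dvd_geomSum_four_of_lt_sq hp (by lia) hd1 hdG hlt
    exact le_of_prime_dvd_geomSum_four_of_dvd_quarticNorm hp hp8 hd hdG hb hN

/-! ### From `ℤ[ζ]` to `ℤ` -/

section Descent

open Polynomial

lemma dvd_of_dvd_eval_of_aeval_mul_eq {K : Type*} [Field K] [CharZero K] {n : ℕ} (hn : 0 < n)
    {ζ : K} (hζ : IsPrimitiveRoot ζ n) {P : ℤ[X]} {v : K} (hv : v ∈ Algebra.adjoin ℤ {ζ})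
    {N : ℤ} (hN : aeval ζ P * v = N) {a d : ℤ} (hd : d ∣ (cyclotomic n ℤ).eval a)
    (hdP : d ∣ P.eval a) : d ∣ N := by
  rw [Algebra.adjoin_singleton_eq_range_aeval] at hv
  obtain ⟨Q, rfl⟩ := hv
  have hroot : aeval ζ (P * Q - C N) = 0 := by
    simpa [sub_eq_zero] using hN
  have hdvd : cyclotomic n ℤ ∣ P * Q - C N := by
    rw [cyclotomic_eq_minpoly hζ hn]
    exact minpoly.isIntegrallyClosed_dvd (hζ.isIntegral hn) hroot
  have heval : d ∣ P.eval a * Q.eval a - N := by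
    simpa using hd.trans (eval_dvd hdvd (x := a))
  exact (dvd_sub_right (hdP.mul_right _)).1 heval

/-- The polynomial `∑ u(t) X ^ t` of degree `< p` whose value at `4` is `seqVal p u`. -/
noncomputable def seqPoly (p : ℕ) (u : ℕ → ℕ) : ℤ[X] := ∑ t ∈ range p, C (u t : ℤ) * X ^ t

lemma eval_four_seqPoly (p : ℕ) (u : ℕ → ℕ) : (seqPoly p u).eval 4 = seqVal p u := by
  simp [seqPoly, seqVal, eval_finsetSum]

lemma aeval_seqPoly {A : Type*} [CommRing A] (p : ℕ) (u : ℕ → ℕ) (z : A) :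
    aeval z (seqPoly p u) = ∑ t ∈ range p, (u t : A) * z ^ t := by
  simp [seqPoly]

lemma eval_four_cyclotomic {p : ℕ} (hp : p.Prime) :
    (cyclotomic p ℤ).eval 4 = (∑ i ∈ range p, 4 ^ i : ℕ) := by
  have := Fact.mk hp
  simp [cyclotomic_prime, eval_finsetSum]

end Descent

/-! ### The sequence `u₁₀` -/

section DiscreteLog

variable {p θ : ℕ}

/-- The sequence `u₁₀ = φ[s₁ + 1, s₃]`. -/
def seqU10 (p θ : ℕ) : ℕ → ℕ := graySeq (seqCompl (seqS1 p θ)) (seqS3 p θ)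

variable [Fact p.Prime] (hθ : IsPrimitiveRoot (θ : ZMod p) (p - 1))
include hθ

lemma pow_mod_mem_cycD_iff (h4 : 4 ∣ p - 1) {n i : ℕ} (hi : i < 4) :
    θ ^ n % p ∈ cycD p θ i ↔ n % 4 = i := by
  have hp1 : 0 < p - 1 := Nat.sub_pos_of_lt (Nat.Prime.one_lt Fact.out)
  have hpow (k : ℕ) : θ ^ k % p = θ ^ n % p ↔ k ≡ n [MOD p - 1] := by
    rw [hθ.eq_orderOf, ← (hθ.isOfFinOrder hp1.ne').pow_eq_pow_iff_modEq]
    exact_mod_cast (ZMod.natCast_eq_natCast_iff (θ ^ k) (θ ^ n) p).symm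
  simp only [cycD, mem_image, mem_range, hpow]
  constructor
  · rintro ⟨j, -, hj⟩
    have := hj.of_dvd h4
    unfold Nat.ModEq at this
    lia
  · intro hn
    refine ⟨n % (p - 1) / 4, ?_, ?_⟩
    · exact Nat.div_lt_div_of_lt_of_dvd h4 (Nat.mod_lt n hp1)
    · have : n % (p - 1) % 4 = i := by rw [Nat.mod_mod_of_dvd n h4, hn]
      rw [← this, Nat.mod_add_div]
      exact Nat.mod_modEq n (p - 1)

lemma zero_notMem_cycD (i : ℕ) : 0 ∉ cycD p θ i := by
  have hp1 : p - 1 ≠ 0 := (Nat.sub_pos_of_lt (Nat.Prime.one_lt Fact.out)).ne'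
  simp only [cycD, mem_image, not_exists, not_and]
  intro j _ h
  have h0 : ((θ ^ (i + 4 * j) : ℕ) : ZMod p) = 0 :=
    (ZMod.natCast_eq_zero_iff _ p).2 (Nat.dvd_of_mod_eq_zero h)
  push_cast at h0
  exact pow_ne_zero _ (hθ.ne_zero hp1) h0

lemma seqU10_zero : seqU10 p θ 0 = 3 := by
  simp [seqU10, graySeq, gray, seqCompl, seqS1, seqS3, zero_notMem_cycD hθ]

lemma seqU10_pow_mod (h4 : 4 ∣ p - 1) (n : ℕ) : seqU10 p θ (θ ^ n % p) = n % 4 := by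
  have : n % 4 = 0 ∨ n % 4 = 1 ∨ n % 4 = 2 ∨ n % 4 = 3 := by lia
  have hmem {i : ℕ} (hi : i < 4) := pow_mod_mem_cycD_iff hθ h4 (n := n) hi
  rcases this with h | h | h | h <;>
    simp [seqU10, graySeq, gray, seqCompl, seqS1, seqS3, hmem, h]

end DiscreteLog

section Periods

variable {p : ℕ} [NeZero p]

lemma sum_range_eq_sum_zmod {M : Type*} [AddCommMonoid M] (f : ℕ → M) :
    ∑ t ∈ range p, f t = ∑ a : ZMod p, f a.val :=
  sum_nbij' (fun t ↦ (t : ZMod p)) ZMod.val (fun _ _ ↦ mem_univ _)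
    (fun a _ ↦ mem_range.2 a.val_lt) (fun _ ht ↦ ZMod.val_cast_of_lt (mem_range.1 ht))
    (fun a _ ↦ ZMod.natCast_zmod_val a)
    (fun _ ht ↦ by rw [ZMod.val_cast_of_lt (mem_range.1 ht)])

lemma zmodChar_mem_adjoin {R : Type*} [CommRing R] {z : R} (hz : z ^ p = 1) (a : ZMod p) :
    AddChar.zmodChar p hz a ∈ Algebra.adjoin ℤ {z} := by
  rw [AddChar.zmodChar_apply]
  exact pow_mem (Algebra.self_mem_adjoin_singleton ℤ z) _

lemma aeval_seqPoly_eq_sum_zmodChar {R : Type*} [CommRing R] {z : R} (hz : z ^ p = 1) (u : ℕ → ℕ) :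
    Polynomial.aeval z (seqPoly p u) = ∑ a : ZMod p, u a.val * AddChar.zmodChar p hz a := by
  simp only [aeval_seqPoly, sum_range_eq_sum_zmod, AddChar.zmodChar_apply]

end Periods

lemma aeval_seqPoly_seqU10 {p θ : ℕ} [Fact p.Prime] (hθ : IsPrimitiveRoot (θ : ZMod p) (p - 1))
    (h4 : 4 ∣ p - 1) {z : ℂ} (hz : z ^ p = 1) {η : ℕ → ℂ}
    (hη : gaussPeriod (AddChar.zmodChar p hz) (θ : ZMod p) 4 = η) :
    Polynomial.aeval z (seqPoly p (seqU10 p θ)) = 3 + η 1 + 2 * η 2 + 3 * η 3 := by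
  have hval (n : ℕ) : seqU10 p θ ((θ : ZMod p) ^ n).val = n % 4 := by
    rw [← Nat.cast_pow, ZMod.val_natCast, seqU10_pow_mod hθ h4]
  have hperiod := sum_mul_gaussPeriod (AddChar.zmodChar p hz) (θ : ZMod p) (e := 4)
    (by norm_num) (Nat.cast : ℕ → ℂ)
  rw [ZMod.card] at hperiod
  rw [aeval_seqPoly_eq_sum_zmodChar hz, sum_eq_zero_add_sum_pow (by rwa [ZMod.card]),
    ZMod.val_zero, seqU10_zero hθ, AddChar.map_zero_eq_one, ZMod.card]
  simp only [hval]
  rw [← hperiod, hη]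
  simp only [sum_range_succ, range_zero, sum_empty]
  push_cast
  ring

lemma exists_dvd_quarticNorm_of_dvd_seqVal {p θ d : ℕ} [Fact p.Prime] (hp8 : p % 8 = 5)
    (hθ : IsPrimitiveRoot (θ : ZMod p) (p - 1)) (hdG : d ∣ ∑ i ∈ range p, 4 ^ i)
    (hdU : d ∣ seqVal p (seqU10 p θ)) :
    ∃ b : ℤ, b ^ 2 ≤ p ∧ (d : ℤ) ∣ quarticNorm p b := by
  have hp : p.Prime := Fact.out
  have hζ := Complex.isPrimitiveRoot_exp p hp.ne_zero
  set ζ := Complex.exp (2 * Real.pi * Complex.I / p)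
  have hψ := AddChar.zmodChar_primitive_of_primitive_root p hζ
  have hθ' : IsPrimitiveRoot (θ : ZMod p) (Fintype.card (ZMod p) - 1) := by rwa [ZMod.card]
  obtain ⟨η, hη⟩ : ∃ η, gaussPeriod (AddChar.zmodChar p hζ.pow_eq_one) (θ : ZMod p) 4 = η :=
    ⟨_, rfl⟩
  have hη_mem (i : ℕ) : η i ∈ Algebra.adjoin ℤ {ζ} :=
    hη ▸ sum_mem fun n _ ↦ zmodChar_mem_adjoin hζ.pow_eq_one _
  obtain ⟨b, hb, hN⟩ :=
    exists_gaussPeriod_combination_mul_eq_quarticNorm hθ' (by rwa [ZMod.card]) hψ hη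
  rw [ZMod.card] at hb hN
  rw [← aeval_seqPoly_seqU10 hθ (by lia) hζ.pow_eq_one hη] at hN
  refine ⟨b, hb, dvd_of_dvd_eval_of_aeval_mul_eq hp.pos hζ ?_ hN (a := 4) ?_ ?_⟩
  · lift η to ℕ → Algebra.adjoin ℤ {ζ} using hη_mem
    exact_mod_cast (4 * (3 + η 3 + 2 * η 0 + 3 * η 1) *
      (9 + 5 * p + (6 + 4 * b) * (η 0 - η 1 + η 2 - η 3)) : Algebra.adjoin ℤ {ζ}).2
  · rw [eval_four_cyclotomic hp]
    exact_mod_cast hdG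
  · rw [eval_four_seqPoly]
    exact_mod_cast hdU

lemma gcd_seqVal_seqU10_le {p θ : ℕ} (hp : p.Prime) (hp8 : p % 8 = 5)
    (hθ : IsPrimitiveRoot (θ : ZMod p) (p - 1)) :
    Nat.gcd (4 ^ p - 1) (seqVal p (seqU10 p θ)) ≤ 3 * (1 + 2 * p) := by
  have := Fact.mk hp
  set S := ∑ i ∈ range p, 4 ^ i
  set U := seqVal p (seqU10 p θ)
  have hgcd : Nat.gcd S U ≤ 1 + 2 * p := by
    obtain ⟨b, hb, hdN⟩ :=
      exists_dvd_quarticNorm_of_dvd_seqVal hp8 hθ (Nat.gcd_dvd_left S U) (Nat.gcd_dvd_right S U)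
    exact le_of_dvd_geomSum_four_of_dvd_quarticNorm hp hp8 (Nat.gcd_dvd_left S U) hb hdN
  have hS : 0 < S := geom_sum_pos (by norm_num) hp.ne_zero
  have hpos : 0 < Nat.gcd 3 U * Nat.gcd S U :=
    Nat.mul_pos (Nat.gcd_pos_of_pos_left U three_pos) (Nat.gcd_pos_of_pos_left U hS)
  have h3S : S * 3 = 4 ^ p - 1 := geom_sum_mul_of_one_le (by norm_num) p
  calc Nat.gcd (4 ^ p - 1) U = Nat.gcd (3 * S) U := by rw [← h3S, mul_comm]
    _ ≤ Nat.gcd 3 U * Nat.gcd S U := Nat.le_of_dvd hpos (Nat.gcd_mul_left_dvd_mul_gcd U 3 S)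
    _ ≤ 3 * (1 + 2 * p) := Nat.mul_le_mul (Nat.gcd_le_left U three_pos) hgcd

lemma floor_logb_le_adicComplexity4 {p : ℕ} (hp : p ≠ 0) {u : ℕ → ℕ} {B : ℝ}
    (hB : (Nat.gcd (4 ^ p - 1) (seqVal p u) : ℝ) ≤ B) :
    ⌊Real.logb 4 (((4 ^ p - 1 : ℕ) : ℝ) / B + 1)⌋ ≤ adicComplexity4 p u := by
  have hpow : 1 < 4 ^ p := Nat.one_lt_pow hp (by norm_num)
  have hgcd : 0 < (Nat.gcd (4 ^ p - 1) (seqVal p u) : ℝ) := by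
    exact_mod_cast Nat.gcd_pos_of_pos_left _ (by lia)
  have hB0 : 0 < B := hgcd.trans_le hB
  unfold adicComplexity4
  gcongr
  norm_num

theorem theorem5
    (p : ℕ) (hp : p.Prime) (hp8 : p % 8 = 5)
    (x y : ℤ) (hx : x % 4 = 1) (hxy : (p : ℤ) = x ^ 2 + 4 * y ^ 2)
    (θ : ℕ) (hθ : IsPrimitiveRoot (θ : ZMod p) (p - 1))
    (hy : 16 * (((cycD p θ 0).filter (fun a => (a + 1) % p ∈ cycD p θ 1)).card : ℤ)
        = (p : ℤ) + 1 + 2 * x - 8 * y)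
    :
    ⌊Real.logb 4 (((4 ^ p - 1 : ℕ) : ℝ) / ((3 * (1 + 2 * (p : ℝ)))) + 1)⌋ ≤
      adicComplexity4 p (graySeq (seqCompl (seqS1 p θ)) (seqS3 p θ)) :=
  floor_logb_le_adicComplexity4 hp.ne_zero (by exact_mod_cast gcd_seqVal_seqU10_le hp hp8 hθ)
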